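/- arXiv:1903.07773 — 2 statements merged into one kernel-verified Lean document; each statement's English description precedes it below -/
import Mathlib

section
/- Let (X,Y) be a coherent pair of random variables. Then for every δ ∈ [0,1], P(X ≤ δ and Y ≥ 1 − δ) ≤ δ · (P(X ≤ δ) + P(Y ≥ 1 − δ)). -/
/-!
Let `S = {X ≤ δ}`, `T = {1 - δ ≤ Y}`, and let `A` be the event witnessing coherence. Since `S` is
`σ(X)`-measurable, `P(A ∩ S) = ∫_S X ≤ δ P(S)`; since `T` is `σ(Y)`-measurable,
`P(A ∩ T) = ∫_T Y ≥ (1 - δ) P(T)`, that is, `P(T \ A) ≤ δ P(T)`. The bound follows from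
`S ∩ T ⊆ (A ∩ S) ∪ (T \ A)`.
-/

open MeasureTheory

/-- A pair of random variables `(X, Y)` on a probability space, each with values in `[0,1]`,
is *coherent* if there is an event `A` such that `X` is a version of the conditional
probability of `A` given `σ(X)` and `Y` is a version of the conditional probability of `A`
given `σ(Y)`. -/
def IsCoherent {Ω : Type*} [MeasurableSpace Ω] (μ : Measure Ω) (X Y : Ω → ℝ) : Prop :=
  Measurable X ∧ Measurable Y ∧
  (∀ ω, X ω ∈ Set.Icc (0:ℝ) 1) ∧ (∀ ω, Y ω ∈ Set.Icc (0:ℝ) 1) ∧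
  ∃ A : Set Ω, MeasurableSet A ∧
    X =ᵐ[μ] μ[A.indicator (fun _ => (1:ℝ)) | MeasurableSpace.comap X inferInstance] ∧
    Y =ᵐ[μ] μ[A.indicator (fun _ => (1:ℝ)) | MeasurableSpace.comap Y inferInstance]

/-- The defining property of conditional probability, on the `σ(Z)`-measurable event that `Z` lies in `B`. -/
theorem setIntegral_eq_measureReal_inter {Ω : Type*} [MeasurableSpace Ω] {μ : Measure Ω}
    [IsProbabilityMeasure μ] {Z : Ω → ℝ} (hZ : Measurable Z) {A : Set Ω} (hA : MeasurableSet A)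
    (h : Z =ᵐ[μ] μ[A.indicator (fun _ => (1:ℝ)) | MeasurableSpace.comap Z inferInstance])
    {B : Set ℝ} (hB : MeasurableSet B) :
    ∫ ω in Z ⁻¹' B, Z ω ∂μ = μ.real (A ∩ Z ⁻¹' B) := by
  have hint : Integrable (A.indicator (fun _ => (1:ℝ))) μ :=
    (integrable_const (1:ℝ)).indicator hA
  rw [integral_congr_ae (ae_restrict_of_ae h),
    setIntegral_condExp hZ.comap_le hint ⟨B, hB, rfl⟩, integral_indicator hA]
  simp [measureReal_restrict_apply hA]

theorem stmt_1 {Ω : Type*} [MeasurableSpace Ω] (μ : Measure Ω) [IsProbabilityMeasure μ]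
    (X Y : Ω → ℝ) (hXY : IsCoherent μ X Y) (δ : ℝ) (hδ0 : 0 ≤ δ) (hδ1 : δ ≤ 1) :
    (μ {ω | X ω ≤ δ ∧ 1 - δ ≤ Y ω}).toReal ≤
      δ * ((μ {ω | X ω ≤ δ}).toReal + (μ {ω | 1 - δ ≤ Y ω}).toReal) := by
  obtain ⟨hX, hY, hX01, hY01, A, hA, hXA, hYA⟩ := hXY
  have hS : MeasurableSet (X ⁻¹' Set.Iic δ) := hX measurableSet_Iic
  have hT : MeasurableSet (Y ⁻¹' Set.Ici (1 - δ)) := hY measurableSet_Ici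
  have intX : Integrable X μ := integrable_condExp.congr hXA.symm
  have intY : Integrable Y μ := integrable_condExp.congr hYA.symm
  have h1 : μ.real (A ∩ X ⁻¹' Set.Iic δ) ≤ δ * μ.real (X ⁻¹' Set.Iic δ) := by
    rw [← setIntegral_eq_measureReal_inter hX hA hXA measurableSet_Iic]
    have := setIntegral_mono_on intX.integrableOn (integrable_const δ).integrableOn hS
      (fun ω hω => hω)
    simpa [mul_comm] using this
  have h2 : (1 - δ) * μ.real (Y ⁻¹' Set.Ici (1 - δ)) ≤ μ.real (A ∩ Y ⁻¹' Set.Ici (1 - δ)) := by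
    rw [← setIntegral_eq_measureReal_inter hY hA hYA measurableSet_Ici]
    have := setIntegral_mono_on (integrable_const (1 - δ)).integrableOn intY.integrableOn hT
      (fun ω hω => hω)
    simpa [mul_comm] using this
  have h3 : μ.real (Y ⁻¹' Set.Ici (1 - δ) ∩ A) + μ.real (Y ⁻¹' Set.Ici (1 - δ) \ A)
      = μ.real (Y ⁻¹' Set.Ici (1 - δ)) := measureReal_inter_add_sdiff hA
  have h4 : μ.real (X ⁻¹' Set.Iic δ ∩ Y ⁻¹' Set.Ici (1 - δ)) ≤
      μ.real (A ∩ X ⁻¹' Set.Iic δ) + μ.real (Y ⁻¹' Set.Ici (1 - δ) \ A) := by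
    refine (measureReal_mono ?_).trans (measureReal_union_le _ _)
    rintro ω ⟨hx, hy⟩
    by_cases h : ω ∈ A
    · exact Or.inl ⟨h, hx⟩
    · exact Or.inr ⟨hy, h⟩
  rw [Set.inter_comm] at h3
  change μ.real (X ⁻¹' Set.Iic δ ∩ Y ⁻¹' Set.Ici (1 - δ)) ≤
    δ * (μ.real (X ⁻¹' Set.Iic δ) + μ.real (Y ⁻¹' Set.Ici (1 - δ)))
  linarith
end

section
/- Let (X,Y) be a coherent pair of random variables with E X = E Y = p. Then for every δ ∈ [0,1), P(|X − Y| ≥ 1 − δ) ≤ 2p(1 − p)/(1 − δ). -/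
/-!
By Markov's inequality it suffices to show `E|X - Y| ≤ 2p(1-p)` for every coherent pair.
This is proved by exhibiting a dual certificate. Coherence says that `Z = 1_A` satisfies
`E[(Z - X) φ(X)] = 0 = E[(Z - Y) φ(Y)]` for every bounded measurable `φ`. With
`φ(x) = 4p - 1 - 2x` truncated to `[-1, 1]`, the pointwise inequality

  `|x - y| ≤ 2(1-p)² z + 2p² (1-z) + (z - x) φ(x) + (z - y) φ(y)`

holds for all `x, y ∈ [0,1]` and `z ∈ {0, 1}` (`abs_sub_le_certificate`). Taking
expectations, the last two terms vanish and the first two give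
`2(1-p)² p + 2p² (1-p) = 2p(1-p)`.
-/

open MeasureTheory

/-- The dual certificate: the line `4p - 1 - 2x` truncated to `[-1, 1]`. Its value and slope at
`x = p` are forced by the extremal pair `X = 1_A`, `Y = p`. -/
noncomputable def certificate (p x : ℝ) : ℝ := max (-1) (min 1 (4 * p - 1 - 2 * x))

lemma certificate_cases (p x : ℝ) :
    (certificate p x = -1 ∧ 2 * p ≤ x) ∨
    (certificate p x = 1 ∧ x ≤ 2 * p - 1) ∨
    (certificate p x = 4 * p - 1 - 2 * x ∧ x ≤ 2 * p ∧ 2 * p - 1 ≤ x) := by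
  unfold certificate
  rcases le_total 1 (4 * p - 1 - 2 * x) with h | h
  · right; left
    rw [min_eq_left h]
    exact ⟨by norm_num, by linarith⟩
  · rw [min_eq_right h]
    rcases le_total (-1) (4 * p - 1 - 2 * x) with h' | h'
    · right; right
      exact ⟨max_eq_right h', by linarith, by linarith⟩
    · left
      exact ⟨max_eq_left h', by linarith⟩

lemma continuous_certificate (p : ℝ) : Continuous (certificate p) := by
  unfold certificate
  fun_prop

lemma abs_certificate_le_one (p x : ℝ) : |certificate p x| ≤ 1 :=
  abs_le.2 ⟨le_max_left _ _, max_le (by norm_num) (min_le_left _ _)⟩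

/-- The symmetry exchanging `A` with its complement. -/
lemma certificate_compl (p x : ℝ) : certificate (1 - p) (1 - x) = -certificate p x := by
  rcases certificate_cases p x with ⟨h, h1⟩ | ⟨h, h1⟩ | ⟨h, h1, h2⟩ <;>
  rcases certificate_cases (1 - p) (1 - x) with ⟨k, k1⟩ | ⟨k, k1⟩ | ⟨k, k1, k2⟩ <;>
  rw [h, k] <;> linarith

/-- The pointwise inequality on `A`, for ordered arguments. -/
lemma sub_le_certificate_one {p x y : ℝ} (hxy : x ≤ y) (hy : y ≤ 1) :
    y - x ≤ 2 * (1 - p) ^ 2 + (1 - x) * certificate p x + (1 - y) * certificate p y := by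
  rcases certificate_cases p x with ⟨h, h1⟩ | ⟨h, h1⟩ | ⟨h, h1, h2⟩ <;>
  rcases certificate_cases p y with ⟨k, k1⟩ | ⟨k, k1⟩ | ⟨k, k1, k2⟩ <;>
  rw [h, k] <;>
  nlinarith [sq_nonneg p, sq_nonneg (1 - p), sq_nonneg (x - p), sq_nonneg (y - p),
    mul_nonneg (sub_nonneg.2 hy) (sub_nonneg.2 k1)]

lemma abs_sub_le_certificate_one {p x y : ℝ} (hx : x ∈ Set.Icc (0 : ℝ) 1)
    (hy : y ∈ Set.Icc (0 : ℝ) 1) :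
    |x - y| ≤ 2 * (1 - p) ^ 2 + (1 - x) * certificate p x + (1 - y) * certificate p y := by
  rcases le_total x y with h | h
  · rw [abs_sub_comm, abs_of_nonneg (sub_nonneg.2 h)]
    exact sub_le_certificate_one h hy.2
  · rw [abs_of_nonneg (sub_nonneg.2 h)]
    linarith [sub_le_certificate_one (p := p) h hx.2]

lemma abs_sub_le_certificate {p x y z : ℝ} (hx : x ∈ Set.Icc (0 : ℝ) 1)
    (hy : y ∈ Set.Icc (0 : ℝ) 1) (hz : z = 0 ∨ z = 1) :
    |x - y| ≤ 2 * (1 - p) ^ 2 * z + 2 * p ^ 2 * (1 - z)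
      + (z - x) * certificate p x + (z - y) * certificate p y := by
  rcases hz with rfl | rfl
  · have h := abs_sub_le_certificate_one (p := 1 - p) (x := 1 - x) (y := 1 - y)
      ⟨by linarith [hx.2], by linarith [hx.1]⟩ ⟨by linarith [hy.2], by linarith [hy.1]⟩
    rw [certificate_compl, certificate_compl, show 1 - x - (1 - y) = y - x by ring,
      abs_sub_comm] at h
    linarith
  · linarith [abs_sub_le_certificate_one (p := p) hx hy]

/-- If `X` is a version of `E[Z | σ(X)]`, then `Z - X` is orthogonal to bounded continuous functions
of `X`. -/
lemma integral_sub_mul_eq_zero {Ω : Type*} [MeasurableSpace Ω] {μ : Measure Ω}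
    [IsProbabilityMeasure μ] {X Z : Ω → ℝ} (hX : Measurable X) (hZ : Integrable Z μ)
    (hXZ : X =ᵐ[μ] μ[Z | MeasurableSpace.comap X inferInstance])
    {φ : ℝ → ℝ} (hφ : Continuous φ) (hb : ∀ x, |φ x| ≤ 1) :
    Integrable (fun ω => (Z ω - X ω) * φ (X ω)) μ ∧ ∫ ω, (Z ω - X ω) * φ (X ω) ∂μ = 0 := by
  have hXi : Integrable X μ := integrable_condExp.congr hXZ.symm
  have hφX : AEStronglyMeasurable (fun ω => φ (X ω)) μ :=
    (hφ.measurable.comp hX).aestronglyMeasurable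
  have hZφ : Integrable (fun ω => Z ω * φ (X ω)) μ :=
    hZ.mul_bdd hφX (c := 1) (ae_of_all _ fun ω => hb _)
  have hXφ : Integrable (fun ω => X ω * φ (X ω)) μ :=
    hXi.mul_bdd hφX (c := 1) (ae_of_all _ fun ω => hb _)
  have hsm : StronglyMeasurable[MeasurableSpace.comap X inferInstance] (fun ω => φ (X ω)) :=
    (hφ.measurable.comp (comap_measurable X)).stronglyMeasurable
  have hpull := condExp_mul_of_stronglyMeasurable_right hsm hZφ hZ
  have heq : ∫ ω, Z ω * φ (X ω) ∂μ = ∫ ω, X ω * φ (X ω) ∂μ := by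
    rw [← integral_condExp hX.comap_le]
    refine integral_congr_ae (hpull.trans ?_)
    filter_upwards [hXZ] with ω hω
    simp only [Pi.mul_apply, ← hω]
  simp only [sub_mul]
  exact ⟨hZφ.sub hXφ, by rw [integral_sub hZφ hXφ, heq, sub_self]⟩

theorem stmt_16 {Ω : Type*} [MeasurableSpace Ω] (μ : Measure Ω) [IsProbabilityMeasure μ]
    (X Y : Ω → ℝ) (hXY : IsCoherent μ X Y) (p : ℝ)
    (hmX : ∫ ω, X ω ∂μ = p) (hmY : ∫ ω, Y ω ∂μ = p)
    (δ : ℝ) (hδ0 : 0 ≤ δ) (hδ1 : δ < 1) :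
    (μ {ω | 1 - δ ≤ |X ω - Y ω|}).toReal ≤ 2 * p * (1 - p) / (1 - δ) := by
  obtain ⟨hX, hY, hX01, hY01, A, hA, hXA, hYA⟩ := hXY
  set Z : Ω → ℝ := A.indicator (fun _ => (1 : ℝ)) with hZdef
  have hZ : Integrable Z μ := (integrable_const _).indicator hA
  have hZ01 : ∀ ω, Z ω = 0 ∨ Z ω = 1 := fun ω => by
    by_cases h : ω ∈ A <;> simp [hZdef, h]
  have hZp : ∫ ω, Z ω ∂μ = p := by
    rw [← hmX, ← integral_condExp hX.comap_le]
    exact integral_congr_ae hXA.symm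
  obtain ⟨hXi, hX0⟩ := integral_sub_mul_eq_zero hX hZ hXA (continuous_certificate p)
    (abs_certificate_le_one p)
  obtain ⟨hYi, hY0⟩ := integral_sub_mul_eq_zero hY hZ hYA (continuous_certificate p)
    (abs_certificate_le_one p)
  have hD : Integrable (fun ω => |X ω - Y ω|) μ :=
    ((integrable_condExp.congr hXA.symm).sub (integrable_condExp.congr hYA.symm)).abs
  have h1 : Integrable (fun ω => 2 * (1 - p) ^ 2 * Z ω) μ := hZ.const_mul _
  have h2 : Integrable (fun ω => 2 * p ^ 2 * (1 - Z ω)) μ :=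
    ((integrable_const _).sub hZ).const_mul _
  have h12 : Integrable (fun ω => 2 * (1 - p) ^ 2 * Z ω + 2 * p ^ 2 * (1 - Z ω)) μ := h1.add h2
  have h12X : Integrable (fun ω => 2 * (1 - p) ^ 2 * Z ω + 2 * p ^ 2 * (1 - Z ω)
      + (Z ω - X ω) * certificate p (X ω)) μ := h12.add hXi
  have hE : ∫ ω, |X ω - Y ω| ∂μ ≤ 2 * p * (1 - p) := by
    calc ∫ ω, |X ω - Y ω| ∂μ
        ≤ ∫ ω, (2 * (1 - p) ^ 2 * Z ω + 2 * p ^ 2 * (1 - Z ω)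
            + (Z ω - X ω) * certificate p (X ω) + (Z ω - Y ω) * certificate p (Y ω)) ∂μ :=
          integral_mono hD (h12X.add hYi)
            fun ω => abs_sub_le_certificate (hX01 ω) (hY01 ω) (hZ01 ω)
      _ = 2 * p * (1 - p) := by
          rw [integral_add h12X hYi, integral_add h12 hXi,
            integral_add h1 h2, hX0, hY0, integral_const_mul, integral_const_mul,
            integral_sub (integrable_const _) hZ, hZp]
          simp
          ring
  have hM := mul_meas_ge_le_integral_of_nonneg (μ := μ)
    (ae_of_all _ fun ω => abs_nonneg (X ω - Y ω)) hD (1 - δ)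
  rw [le_div_iff₀ (by linarith), mul_comm]
  exact hM.trans hE
end
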